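/- Let d ≥ 3 be an integer and let f : ℝ^d → ℝ be a continuously differentiable, nonnegative function with compact support. Then ∫_{ℝ^d} ‖x‖^{2−d} f(x)^{d−2} dx = −((d−2)/2) ∫_{ℝ^d} ‖x‖^{3−d} f(x)^{d−3} ⟨∇f(x), x/‖x‖⟩ dx, where ∇f is the gradient of f and ⟨·,·⟩ is the Euclidean inner product; here the powers of f are natural-number powers (so f^{d−3} ≡ 1 when d = 3), and both integrands are assigned the value 0 at x = 0. -/

import Mathlib

open MeasureTheory RealInnerProductSpace

/-- Polar coordinates: if all weighted radial integrals vanish, so does the integral. -/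
theorem integral_eq_zero_of_radial (n : ℕ) (H : EuclideanSpace ℝ (Fin (n + 3)) → ℝ)
    (h : ∀ θ : EuclideanSpace ℝ (Fin (n + 3)), ‖θ‖ = 1 →
      ∫ r in Set.Ioi (0 : ℝ), r ^ (n + 2) * H (r • θ) = 0) :
    ∫ x, H x = 0 := by
  by_cases hH : Integrable H
  swap
  · exact integral_undef hH
  have hmp := (volume : Measure (EuclideanSpace ℝ (Fin (n + 3)))).measurePreserving_homeomorphUnitSphereProd
  have hemb := (homeomorphUnitSphereProd (EuclideanSpace ℝ (Fin (n + 3)))).measurableEmbedding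
  set G : Metric.sphere (0 : EuclideanSpace ℝ (Fin (n + 3))) 1 × Set.Ioi (0 : ℝ) → ℝ :=
    fun p => H (p.2.1 • p.1.1) with hG
  have hcomp : ∀ x : ({0}ᶜ : Set (EuclideanSpace ℝ (Fin (n + 3)))),
      G (homeomorphUnitSphereProd _ x) = H x := by
    intro x
    have hx : ‖x.1‖ ≠ 0 := norm_ne_zero_iff.2 x.2
    simp [hG, smul_smul, hx]
  have e1 : ∫ x, H x = ∫ p, G p ∂((volume : Measure (EuclideanSpace ℝ (Fin (n + 3)))).toSphere.prod
      (Measure.volumeIoiPow (Module.finrank ℝ (EuclideanSpace ℝ (Fin (n + 3))) - 1))) := by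
    rw [← hmp.integral_comp hemb]
    simp_rw [hcomp]
    rw [integral_subtype_comap (measurableSet_singleton _).compl, restrict_compl_singleton]
  have hI : Integrable G ((volume : Measure (EuclideanSpace ℝ (Fin (n + 3)))).toSphere.prod
      (Measure.volumeIoiPow (Module.finrank ℝ (EuclideanSpace ℝ (Fin (n + 3))) - 1))) := by
    rw [← hmp.integrable_comp_emb hemb]
    have : G ∘ (homeomorphUnitSphereProd (EuclideanSpace ℝ (Fin (n + 3)))) = H ∘ Subtype.val :=
      funext hcomp
    rw [this, ← integrableOn_iff_comap_subtypeVal (measurableSet_singleton _).compl]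
    exact hH.integrableOn
  rw [e1, integral_prod _ hI]
  refine integral_eq_zero_of_ae (Filter.Eventually.of_forall fun θ => ?_)
  have hθ : ‖θ.1‖ = 1 := by simp
  simp only [hG, Measure.volumeIoiPow, ENNReal.ofReal, Pi.zero_apply]
  rw [integral_withDensity_eq_integral_smul, integral_subtype_comap measurableSet_Ioi
    fun a ↦ Real.toNNReal (a ^ (Module.finrank ℝ (EuclideanSpace ℝ (Fin (n + 3))) - 1)) • H (a • θ.1)]
  · refine Eq.trans ?_ (h θ.1 hθ)
    refine setIntegral_congr_fun measurableSet_Ioi fun x hx ↦ ?_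
    rw [NNReal.smul_def, Real.coe_toNNReal _ (pow_nonneg hx.out.le _)]
    simp
  · exact (measurable_subtype_coe.pow_const _).real_toNNReal

theorem integrable_weight_mul (n : ℕ) (K : EuclideanSpace ℝ (Fin (n + 3)) → ℝ)
    (hK : Continuous K) (hs : HasCompactSupport K) :
    Integrable fun x => ‖x‖ ^ ((2 : ℝ) - (n + 3 : ℕ)) * K x := by
  obtain ⟨R, hR⟩ := hs.isCompact.isBounded.subset_ball (0 : EuclideanSpace ℝ (Fin (n + 3)))
  obtain ⟨C, hC⟩ := hs.exists_bound_of_continuous hK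
  have h1 : IntegrableOn (fun x : EuclideanSpace ℝ (Fin (n + 3)) =>
      (fun r : ℝ => r ^ ((2 : ℝ) - (n + 3 : ℕ))) ‖x‖) (Metric.ball 0 R) := by
    refine (integrableOn_fun_norm_addHaar (E := EuclideanSpace ℝ (Fin (n + 3))) volume
      (f := fun r : ℝ => r ^ ((2 : ℝ) - (n + 3 : ℕ)))).2 ?_
    have : IntegrableOn (fun y : ℝ => y) (Set.Ioo 0 R) :=
      (continuous_id.integrableOn_Icc (a := 0) (b := R)).mono_set Set.Ioo_subset_Icc_self
    refine this.congr_fun (fun y hy => ?_) measurableSet_Ioo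
    have hy0 : 0 < y := hy.1
    simp only [finrank_euclideanSpace, Fintype.card_fin, smul_eq_mul]
    rw [← Real.rpow_natCast, ← Real.rpow_add hy0]
    conv_lhs => rw [← Real.rpow_one y]
    congr 1
    push_cast [Nat.add_sub_cancel]
    ring
  have h2 : IntegrableOn (fun x => ‖x‖ ^ ((2 : ℝ) - (n + 3 : ℕ)) * K x) (Metric.ball 0 R) :=
    Integrable.mul_bdd (c := C) h1 hK.aestronglyMeasurable (Filter.Eventually.of_forall hC)
  refine (integrableOn_iff_integrable_of_support_subset ?_).1 h2
  intro x hx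
  apply hR
  apply subset_tsupport
  intro h
  simp [h] at hx

theorem radial_integral_zero (n : ℕ) (f : EuclideanSpace ℝ (Fin (n + 3)) → ℝ)
    (hf : ContDiff ℝ 1 f) (hsupp : HasCompactSupport f)
    (θ : EuclideanSpace ℝ (Fin (n + 3))) (hθ : ‖θ‖ = 1) :
    ∫ r in Set.Ioi (0 : ℝ), r ^ (n + 2) * (2 * (‖r • θ‖ ^ ((2 : ℝ) - (n + 3 : ℕ)) * f (r • θ) ^ (n + 1))
      + (n + 1) * (‖r • θ‖ ^ ((2 : ℝ) - (n + 3 : ℕ)) *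
        (f (r • θ) ^ n * fderiv ℝ f (r • θ) (r • θ)))) = 0 := by
  set g : ℝ → ℝ := fun r => r ^ 2 * f (r • θ) ^ (n + 1) with hg
  have hline : ContDiff ℝ 1 fun r : ℝ => f (r • θ) := hf.comp (by fun_prop)
  have hgc : ContDiff ℝ 1 g := (contDiff_id.pow 2).mul (hline.pow _)
  have hgs : HasCompactSupport g := by
    obtain ⟨R, hR⟩ := hsupp.isCompact.isBounded.subset_closedBall (0 : EuclideanSpace ℝ (Fin (n + 3)))
    refine HasCompactSupport.intro (isCompact_closedBall (0 : ℝ) R) fun r hr => ?_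
    have : f (r • θ) = 0 := by
      apply image_eq_zero_of_notMem_tsupport
      intro h
      apply hr
      simpa [norm_smul, hθ] using hR h
    simp [hg, this]
  have key := hgs.integral_Ioi_deriv_eq hgc 0
  rw [show -g 0 = 0 by simp [hg]] at key
  refine Eq.trans ?_ key
  refine setIntegral_congr_fun measurableSet_Ioi fun r hr => ?_
  have hr0 : 0 < r := hr
  have hd1 : HasDerivAt (fun r : ℝ => f (r • θ)) (fderiv ℝ f (r • θ) θ) r := by
    have h1 := ((hf.differentiable one_ne_zero) (r • θ)).hasFDerivAt
    have h2 : HasDerivAt (fun r : ℝ => r • θ) θ r := by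
      simpa using (hasDerivAt_id r).smul_const θ
    exact h1.comp_hasDerivAt r h2
  have hd := ((hasDerivAt_pow 2 r).mul (hd1.pow (n + 1))).deriv
  have hgd : deriv g r = _ := hd
  simp only [hgd]
  have hp : r ^ (n + 2) * r ^ ((2 : ℝ) - (n + 3 : ℕ)) = r := by
    rw [← Real.rpow_natCast, ← Real.rpow_add hr0]
    conv_rhs => rw [← Real.rpow_one r]
    congr 1
    push_cast
    ring
  rw [norm_smul, hθ, mul_one, Real.norm_of_nonneg hr0.le, map_smul, smul_eq_mul]
  simp only [Pi.pow_apply, Nat.add_sub_cancel]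
  push_cast
  push_cast at hp
  generalize r ^ ((2 : ℝ) - (n + 3)) = w at *
  linear_combination (2 * f (r • θ) ^ (n + 1)
    + (n + 1) * (f (r • θ) ^ n * (r * fderiv ℝ f (r • θ) θ))) * hp

/-- Integration-by-parts identity underlying the weighted Sobolev embedding: for an integer
`d ≥ 3` and a continuously differentiable, nonnegative, compactly supported function
`f : ℝ^d → ℝ`,
`∫ ‖x‖^{2−d} f(x)^{d−2} dx = −((d−2)/2) ∫ ‖x‖^{3−d} f(x)^{d−3} ⟨∇f(x), x/‖x‖⟩ dx`.
The powers of `‖x‖` are real powers (`rpow`), the powers of `f` are natural-number powers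
(so `f^{d−3} ≡ 1` when `d = 3`), and both integrands vanish at `x = 0`: at the origin the
left integrand has weight `0^{2−d} = 0`, while on the right the unit radial vector
`x/‖x‖ = ‖x‖⁻¹ • x` is `0`. -/
theorem radial_integration_by_parts_euclidean
    (d : ℕ) (hd : 3 ≤ d) (f : EuclideanSpace ℝ (Fin d) → ℝ)
    (hf : ContDiff ℝ 1 f) (hsupp : HasCompactSupport f)
    (hpos : ∀ x, 0 ≤ f x) :
    ∫ x, ‖x‖ ^ ((2 : ℝ) - d) * f x ^ (d - 2)
      = -(((d : ℝ) - 2) / 2) *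
          ∫ x, ‖x‖ ^ ((3 : ℝ) - d) * f x ^ (d - 3) * ⟪gradient f x, ‖x‖⁻¹ • x⟫ := by
  obtain ⟨n, rfl⟩ := Nat.exists_eq_add_of_le' hd
  have e2 : ∀ x : EuclideanSpace ℝ (Fin (n + 3)),
      ‖x‖ ^ ((3 : ℝ) - (n + 3 : ℕ)) * f x ^ (n + 3 - 3) * ⟪gradient f x, ‖x‖⁻¹ • x⟫
      = ‖x‖ ^ ((2 : ℝ) - (n + 3 : ℕ)) * (f x ^ n * fderiv ℝ f x x) := by
    intro x
    rcases eq_or_ne x 0 with rfl | hx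
    · simp
    have hx0 : 0 < ‖x‖ := norm_pos_iff.2 hx
    have h3 : ‖x‖ ^ ((3 : ℝ) - (n + 3 : ℕ)) = ‖x‖ ^ ((2 : ℝ) - (n + 3 : ℕ)) * ‖x‖ := by
      rw [← Real.rpow_add_one hx0.ne']
      congr 1
      ring
    have h4 : ⟪gradient f x, x⟫ = fderiv ℝ f x x := by
      rw [gradient, InnerProductSpace.toDual_symm_apply]
    rw [h3, inner_smul_right, h4, Nat.add_sub_cancel]
    field_simp
  simp_rw [e2]
  rw [show n + 3 - 2 = n + 1 by omega]
  have hfd : Continuous fun x => fderiv ℝ f x x :=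
    (hf.continuous_fderiv one_ne_zero).clm_apply continuous_id
  have hI1 := integrable_weight_mul n (fun x => f x ^ (n + 1)) (hf.continuous.pow _)
    (hsupp.comp_left (g := fun y : ℝ => y ^ (n + 1)) (by simp))
  have hI2 := integrable_weight_mul n (fun x => f x ^ n * fderiv ℝ f x x)
    ((hf.continuous.pow _).mul hfd)
    ((hsupp.fderiv ℝ).mono (fun x hx h => hx (by simp [h])))
  have key := integral_eq_zero_of_radial n
    (fun x => 2 * (‖x‖ ^ ((2 : ℝ) - (n + 3 : ℕ)) * f x ^ (n + 1))
      + (n + 1) * (‖x‖ ^ ((2 : ℝ) - (n + 3 : ℕ)) * (f x ^ n * fderiv ℝ f x x)))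
    (radial_integral_zero n f hf hsupp)
  rw [integral_add (hI1.const_mul 2) (hI2.const_mul _), integral_const_mul, integral_const_mul] at key
  push_cast at key ⊢
  linear_combination key / 2
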